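/- Let n ≥ 1 and T > 0. Let g = (g^{αβ}) be a C¹ field of symmetric positive definite n×n matrices on an open neighborhood of [−T,T] × ℝⁿ, let φ : ℝⁿ → ℝ be Lipschitz with −T < φ(x) < T for all x, let b⁰, b¹,…,bⁿ, c, f : [−T,T] × ℝⁿ → ℝ be continuous, and let v be C² on a neighborhood of [−T,T] × ℝⁿ, vanishing for |x| ≥ R for some R > 0, and satisfying ∂_t²v − Σ g^{αβ}∂_α∂_β v + b⁰∂_t v + Σ b^α∂_α v + c v = f on [−T,T] × ℝⁿ. Then (all sums over α, β = 1,…,n, ∂_αφ the a.e. gradient of φ, and the integrand of the first integral evaluated at (φ(x), x)): ∫_{ℝⁿ} [(∂_t v)²·(1 − Σ g^{αβ}∂_αφ∂_βφ) + Σ g^{αβ}(∂_α v + ∂_αφ·∂_t v)(∂_β v + ∂_βφ·∂_t v) + v²](φ(x),x) dx = ∫_{ℝⁿ} [(∂_t v)² + Σ g^{αβ}∂_α v ∂_β v + v²](−T,x) dx − ∫∫_{{(t,x) : −T < t < φ(x)}} [2∂_t v·(b⁰∂_t v + Σ b^α∂_α v + c v) + 2Σ ∂_α(g^{αβ})·∂_t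 v ∂_β v − Σ (∂_t g^{αβ})·∂_α v ∂_β v − 2v∂_t v − 2f∂_t v] dt dx. -/

import Mathlib

open MeasureTheory

/-- Time partial derivative `∂_t u` of a function on `ℝ × ℝⁿ`. -/
noncomputable def Dt {n : ℕ} (u : ℝ × (Fin n → ℝ) → ℝ) (p : ℝ × (Fin n → ℝ)) : ℝ :=
  fderiv ℝ u p (1, 0)

/-- Spatial partial derivative `∂_α u` of a function on `ℝ × ℝⁿ`. -/
noncomputable def Dx {n : ℕ} (α : Fin n) (u : ℝ × (Fin n → ℝ) → ℝ)
    (p : ℝ × (Fin n → ℝ)) : ℝ :=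
  fderiv ℝ u p (0, Pi.single α 1)

/-!
Multiplied by `2 ∂_t v`, the equation says that the energy current, with time component
`(∂_t v)² + Σ g^{αβ} ∂_α v ∂_β v + v²` and space components `-2 ∂_t v Σ g^{αβ} ∂_β v`, has a
divergence free of second derivatives of `v`. The identity is the divergence theorem for
this field: completing the square in its flux `(dt - dφ)(current)` through the graph of `φ` gives
the boundary integrand on `Σ`.

The divergence theorem below a Lipschitz graph follows by shearing the graph flat. On each
translate of the graph a constant vector field splits into a multiple of `∂_t` and a tangential
part; the tangential derivative of a compactly supported function integrates to zero, and the
`∂_t` derivative integrates to the boundary value.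
-/

open Set Topology

/-- The open region `{ψ(x) < t < φ(x)}` between two graphs over `X`: `regionBetween` with the
factors of the product exchanged, so that time comes first. -/
def betweenGraphs {X : Type*} (ψ φ : X → ℝ) : Set (ℝ × X) :=
  {p | ψ p.2 < p.1 ∧ p.1 < φ p.2}

/-- The closed region `{ψ(x) ≤ t ≤ φ(x)}` between two graphs over `X`, time coordinate first. -/
def closedBetweenGraphs {X : Type*} (ψ φ : X → ℝ) : Set (ℝ × X) :=
  {p | ψ p.2 ≤ p.1 ∧ p.1 ≤ φ p.2}

lemma betweenGraphs_subset_closedBetweenGraphs {X : Type*} (ψ φ : X → ℝ) :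
    betweenGraphs ψ φ ⊆ closedBetweenGraphs ψ φ :=
  fun _ hp => ⟨hp.1.le, hp.2.le⟩

lemma isOpen_betweenGraphs {X : Type*} [TopologicalSpace X] {ψ φ : X → ℝ} (hψ : Continuous ψ)
    (hφ : Continuous φ) : IsOpen (betweenGraphs ψ φ) :=
  (isOpen_lt (hψ.comp continuous_snd) continuous_fst).inter
    (isOpen_lt continuous_fst (hφ.comp continuous_snd))

lemma isClosed_closedBetweenGraphs {X : Type*} [TopologicalSpace X] {ψ φ : X → ℝ}
    (hψ : Continuous ψ) (hφ : Continuous φ) : IsClosed (closedBetweenGraphs ψ φ) :=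
  (isClosed_le (hψ.comp continuous_snd) continuous_fst).inter
    (isClosed_le continuous_fst (hφ.comp continuous_snd))

lemma isClosedEmbedding_graph {X : Type*} [TopologicalSpace X] [T2Space X] {φ : X → ℝ}
    (hφ : Continuous φ) : IsClosedEmbedding fun x => (φ x, x) :=
  Function.LeftInverse.isClosedEmbedding (f := Prod.snd) (fun _ => rfl) continuous_snd
    (by fun_prop)

section Fubini

variable {X : Type*} [MeasurableSpace X] {μ : Measure X} [SFinite μ] {ψ φ : X → ℝ}

lemma ae_fst_ne_of_measurable (hψ : Measurable ψ) :
    ∀ᵐ p ∂(volume : Measure ℝ).prod μ, p.1 ≠ ψ p.2 := by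
  have hgraph : MeasurableSet {p : ℝ × X | p.1 = ψ p.2} :=
    measurableSet_eq_fun measurable_fst (hψ.comp measurable_snd)
  simp only [ae_iff, ne_eq, not_not]
  rw [Measure.prod_apply_symm hgraph]
  simp

lemma setIntegral_betweenGraphs (hψ : Measurable ψ) (hψφ : ψ ≤ φ)
    {W : ℝ × X → ℝ} (hW : Integrable W (volume.prod μ)) :
    ∫ p in betweenGraphs ψ φ, W p ∂volume.prod μ
      = (∫ p in {p | p.1 < φ p.2}, W p ∂volume.prod μ)
        - ∫ p in {p | p.1 < ψ p.2}, W p ∂volume.prod μ := by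
  have hψm : MeasurableSet {p : ℝ × X | p.1 < ψ p.2} :=
    measurableSet_lt measurable_fst (hψ.comp measurable_snd)
  have hsub : {p : ℝ × X | p.1 < ψ p.2} ⊆ {p | p.1 < φ p.2} :=
    fun p hp => hp.trans_le (hψφ p.2)
  have hae : betweenGraphs ψ φ =ᵐ[volume.prod μ]
      ({p | p.1 < φ p.2} \ {p | p.1 < ψ p.2} : Set (ℝ × X)) := by
    filter_upwards [ae_fst_ne_of_measurable (μ := μ) hψ] with p hp
    refine propext ⟨fun h => ⟨h.2, h.1.not_gt⟩, fun h => ⟨?_, h.1⟩⟩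
    exact lt_of_le_of_ne (not_lt.mp h.2) hp.symm
  rw [setIntegral_congr_set hae, setIntegral_sdiff hψm hW.integrableOn hsub]

/-- The shear `(s, x) ↦ (s + φ(x), x)`, which straightens the graph of `φ` to `{s = 0}`. -/
def graphShear (φ : X → ℝ) (hφ : Measurable φ) : ℝ × X ≃ᵐ ℝ × X where
  toFun p := (p.1 + φ p.2, p.2)
  invFun p := (p.1 - φ p.2, p.2)
  left_inv p := by simp
  right_inv p := by simp
  measurable_toFun := (measurable_fst.add (hφ.comp measurable_snd)).prodMk measurable_snd
  measurable_invFun := (measurable_fst.sub (hφ.comp measurable_snd)).prodMk measurable_snd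

lemma measurePreserving_graphShear (hφ : Measurable φ) :
    MeasurePreserving (graphShear φ hφ) (volume.prod μ) (volume.prod μ) := by
  refine ⟨(graphShear φ hφ).measurable, Measure.ext fun s hs => ?_⟩
  rw [MeasurableEquiv.map_apply, Measure.prod_apply_symm hs,
    Measure.prod_apply_symm ((graphShear φ hφ).measurable hs)]
  exact lintegral_congr fun x => measure_preimage_add_right volume (φ x) ((·, x) ⁻¹' s)

lemma integrable_comp_graphShear (hφ : Measurable φ) {W : ℝ × X → ℝ}
    (hW : Integrable W (volume.prod μ)) :
    Integrable (fun p : ℝ × X => W (p.1 + φ p.2, p.2)) (volume.prod μ) :=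
  (measurePreserving_graphShear hφ).integrable_comp_of_integrable hW

lemma setIntegral_subgraph (hφ : Measurable φ) {W : ℝ × X → ℝ}
    (hW : Integrable W (volume.prod μ)) :
    ∫ p in {p | p.1 < φ p.2}, W p ∂volume.prod μ
      = ∫ s in Iio (0 : ℝ), ∫ x, W (s + φ x, x) ∂μ := by
  have hpre : graphShear φ hφ ⁻¹' {p | p.1 < φ p.2} = Iio 0 ×ˢ univ := by
    ext p
    simp [graphShear]
  calc ∫ p in {p | p.1 < φ p.2}, W p ∂volume.prod μ
      = ∫ p in Iio 0 ×ˢ univ, W (p.1 + φ p.2, p.2) ∂volume.prod μ := by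
        rw [← (measurePreserving_graphShear hφ).setIntegral_preimage_emb
          (graphShear φ hφ).measurableEmbedding, hpre]
        rfl
    _ = ∫ s in Iio (0 : ℝ), ∫ x, W (s + φ x, x) ∂μ := by
        rw [setIntegral_prod _ (integrable_comp_graphShear hφ hW).integrableOn,
          Measure.restrict_univ]

end Fubini

section Subgraph

variable {E : Type*} [NormedAddCommGroup E] [NormedSpace ℝ E]

/-- The (unnormalised) conormal `dt - dφ(x)` of the graph `{t = φ(x)}`, equal to `dt` at the
points where `φ` is not differentiable. -/
noncomputable def graphConormal (φ : E → ℝ) (x : E) : ℝ × E →L[ℝ] ℝ :=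
  ContinuousLinearMap.fst ℝ ℝ E - (fderiv ℝ φ x).comp (ContinuousLinearMap.snd ℝ ℝ E)

lemma graphConormal_apply (φ : E → ℝ) (x : E) (d : ℝ × E) :
    graphConormal φ x d = d.1 - fderiv ℝ φ x d.2 := rfl

lemma graphConormal_const_add (φ : E → ℝ) (s : ℝ) (x : E) :
    graphConormal (fun y => s + φ y) x = graphConormal φ x := by
  simp only [graphConormal, fderiv_const_add]

lemma norm_graphConormal_apply_le {φ : E → ℝ} {K : NNReal} (hφ : LipschitzWith K φ) (x : E)
    (d : ℝ × E) : ‖graphConormal φ x d‖ ≤ ‖d.1‖ + K * ‖d.2‖ :=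
  (norm_sub_le _ _).trans <| add_le_add_right
    ((fderiv ℝ φ x).le_of_opNorm_le (norm_fderiv_le_of_lipschitz ℝ hφ) d.2) _

lemma setIntegral_Iio_fderiv_time {H : ℝ × E → ℝ} (hH : ContDiff ℝ 1 H)
    (hHc : HasCompactSupport H) (a : ℝ) (x : E) :
    ∫ s in Iio (0 : ℝ), fderiv ℝ H (s + a, x) (1, 0) = H (a, x) := by
  have hderiv (s : ℝ) : deriv (fun s => H (s + a, x)) s = fderiv ℝ H (s + a, x) (1, 0) :=
    ((hH.differentiable one_ne_zero _).hasFDerivAt.comp_hasDerivAt s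
      (((hasDerivAt_id s).add_const a).prodMk (hasDerivAt_const s x))).deriv
  have hline : IsClosedEmbedding fun s : ℝ => (s + a, x) :=
    Function.LeftInverse.isClosedEmbedding (f := fun p : ℝ × E => p.1 - a)
      (fun s => add_sub_cancel_right s a) (by fun_prop) (by fun_prop)
  have hFTC := (hHc.comp_isClosedEmbedding hline).integral_Iic_deriv_eq
    (hH.comp (by fun_prop)) 0
  rw [← integral_Iic_eq_integral_Iio]
  simpa only [Function.comp_def, hderiv, zero_add] using hFTC

variable [MeasurableSpace E] [BorelSpace E] {μ : Measure E}

lemma aestronglyMeasurable_graphConormal_apply (φ : E → ℝ) (d : ℝ × E) (μ : Measure E) :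
    AEStronglyMeasurable (fun x => graphConormal φ x d) μ :=
  (measurable_const.sub (measurable_fderiv_apply_const ℝ φ d.2)).aestronglyMeasurable

lemma integrable_graphConormal_mul [IsFiniteMeasureOnCompacts μ] {φ : E → ℝ} {K : NNReal}
    (hφ : LipschitzWith K φ) {W : ℝ × E → ℝ} (hW : Continuous W) (hWc : HasCompactSupport W)
    (d : ℝ × E) : Integrable (fun x => graphConormal φ x d * W (φ x, x)) μ := by
  have hgraph := isClosedEmbedding_graph hφ.continuous
  have hint : Integrable (fun x => W (φ x, x)) μ :=
    (hW.comp hgraph.continuous).integrable_of_hasCompactSupport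
      (hWc.comp_isClosedEmbedding hgraph)
  exact hint.bdd_mul (aestronglyMeasurable_graphConormal_apply φ d μ)
    (.of_forall fun x => norm_graphConormal_apply_le hφ x d)

lemma integrable_graphConormal_mul_comp_graphShear [SFinite μ] {φ : E → ℝ} {K : NNReal}
    (hφ : LipschitzWith K φ) {W : ℝ × E → ℝ} (hW : Integrable W (volume.prod μ)) (d : ℝ × E) :
    Integrable (fun p : ℝ × E => graphConormal φ p.2 d * W (p.1 + φ p.2, p.2)) (volume.prod μ) :=
  (integrable_comp_graphShear hφ.continuous.measurable hW).bdd_mul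
    (aestronglyMeasurable_graphConormal_apply φ d μ).comp_snd
    (.of_forall fun p => norm_graphConormal_apply_le hφ p.2 d)

variable [FiniteDimensional ℝ E] [μ.IsAddHaarMeasure]

lemma integral_fderiv_eq_zero_of_lipschitzWith {G : E → ℝ} {C : NNReal} (hG : LipschitzWith C G)
    (hGc : HasCompactSupport G) (w : E) : ∫ x, fderiv ℝ G x w ∂μ = 0 := by
  have hparts := LipschitzWith.integral_lineDeriv_mul_eq (μ := μ) (LipschitzWith.const (1 : ℝ))
    hG hGc (-w)
  have hconst (x : E) : lineDeriv ℝ (fun _ : E => (1 : ℝ)) x (-w) = 0 := by simp [lineDeriv]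
  simp only [hconst, zero_mul, integral_zero, neg_neg, mul_one] at hparts
  rw [hparts]
  refine integral_congr_ae ?_
  filter_upwards [hG.ae_differentiableAt] with x hx
  exact hx.lineDeriv_eq_fderiv.symm

-- Along the graph, `d - (dt - dφ)(d) ∂_t` is tangential, so its derivative integrates to zero.
lemma integral_fderiv_graph {φ : E → ℝ} {K : NNReal} (hφ : LipschitzWith K φ) {H : ℝ × E → ℝ}
    (hH : ContDiff ℝ 1 H) (hHc : HasCompactSupport H) (d : ℝ × E) :
    ∫ x, fderiv ℝ H (φ x, x) d ∂μ
      = ∫ x, graphConormal φ x d * fderiv ℝ H (φ x, x) (1, 0) ∂μ := by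
  have hgraph := isClosedEmbedding_graph hφ.continuous
  obtain ⟨C, hC⟩ := hH.lipschitzWith_of_hasCompactSupport hHc one_ne_zero
  have htangential : ∀ᵐ x ∂μ, fderiv ℝ H (φ x, x) d - graphConormal φ x d *
      fderiv ℝ H (φ x, x) (1, 0) = fderiv ℝ (fun y => H (φ y, y)) x d.2 := by
    filter_upwards [hφ.ae_differentiableAt] with x hx
    have hchain := HasFDerivAt.comp (f := fun y => (φ y, y)) x
      (hH.differentiable one_ne_zero (φ x, x)).hasFDerivAt
      (hx.hasFDerivAt.prodMk (hasFDerivAt_id x))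
    have htangent : d - graphConormal φ x d • ((1 : ℝ), (0 : E)) = (fderiv ℝ φ x d.2, d.2) := by
      ext <;> simp [graphConormal_apply]
    rw [← smul_eq_mul, ← map_smul, ← map_sub, htangent]
    exact (congrArg (· d.2) hchain.fderiv).symm
  have hDH (e : ℝ × E) : Continuous fun p => fderiv ℝ H p e :=
    (hH.continuous_fderiv one_ne_zero).clm_apply continuous_const
  have hint : Integrable (fun x => fderiv ℝ H (φ x, x) d) μ :=
    ((hDH d).comp hgraph.continuous).integrable_of_hasCompactSupport
      ((hHc.fderiv_apply ℝ d).comp_isClosedEmbedding hgraph)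
  rw [← sub_eq_zero, ← integral_sub hint
    (integrable_graphConormal_mul hφ (hDH _) (hHc.fderiv_apply ℝ _) d),
    integral_congr_ae htangential]
  exact integral_fderiv_eq_zero_of_lipschitzWith (hC.comp (hφ.prodMk LipschitzWith.id))
    (hHc.comp_isClosedEmbedding hgraph) d.2

theorem setIntegral_subgraph_fderiv {φ : E → ℝ} {K : NNReal} (hφ : LipschitzWith K φ)
    {H : ℝ × E → ℝ} (hH : ContDiff ℝ 1 H) (hHc : HasCompactSupport H) (d : ℝ × E) :
    ∫ p in {p | p.1 < φ p.2}, fderiv ℝ H p d ∂volume.prod μ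
      = ∫ x, graphConormal φ x d * H (φ x, x) ∂μ := by
  have hDH (e : ℝ × E) : Integrable (fun p => fderiv ℝ H p e) (volume.prod μ) :=
    ((hH.continuous_fderiv one_ne_zero).clm_apply continuous_const).integrable_of_hasCompactSupport
      (hHc.fderiv_apply ℝ e)
  have hslice (s : ℝ) : ∫ x, fderiv ℝ H (s + φ x, x) d ∂μ
      = ∫ x, graphConormal φ x d * fderiv ℝ H (s + φ x, x) (1, 0) ∂μ := by
    simpa only [graphConormal_const_add] using
      integral_fderiv_graph ((LipschitzWith.const s).add hφ) hH hHc d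
  have hswap : Integrable (fun p : ℝ × E => graphConormal φ p.2 d *
      fderiv ℝ H (p.1 + φ p.2, p.2) (1, 0)) ((volume.restrict (Iio 0)).prod μ) :=
    (integrable_graphConormal_mul_comp_graphShear hφ (hDH _) d).mono_measure
      (Measure.prod_mono Measure.restrict_le_self le_rfl)
  calc ∫ p in {p | p.1 < φ p.2}, fderiv ℝ H p d ∂volume.prod μ
      = ∫ s in Iio (0 : ℝ), ∫ x, fderiv ℝ H (s + φ x, x) d ∂μ :=
        setIntegral_subgraph hφ.continuous.measurable (hDH d)
    _ = ∫ s in Iio (0 : ℝ), ∫ x, graphConormal φ x d * fderiv ℝ H (s + φ x, x) (1, 0) ∂μ := by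
        simp only [hslice]
    _ = ∫ x, (∫ s in Iio (0 : ℝ), graphConormal φ x d * fderiv ℝ H (s + φ x, x) (1, 0)) ∂μ :=
        integral_integral_swap hswap
    _ = ∫ x, graphConormal φ x d * H (φ x, x) ∂μ := by
        simp only [integral_const_mul, setIntegral_Iio_fderiv_time hH hHc]

lemma setIntegral_betweenGraphs_fderiv {ψ φ : E → ℝ} {K L : NNReal} (hψ : LipschitzWith L ψ)
    (hφ : LipschitzWith K φ) (hψφ : ψ ≤ φ) {H : ℝ × E → ℝ} (hH : ContDiff ℝ 1 H)
    (hHc : HasCompactSupport H) (d : ℝ × E) :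
    ∫ p in betweenGraphs ψ φ, fderiv ℝ H p d ∂volume.prod μ
      = (∫ x, graphConormal φ x d * H (φ x, x) ∂μ)
        - ∫ x, graphConormal ψ x d * H (ψ x, x) ∂μ := by
  rw [setIntegral_betweenGraphs hψ.continuous.measurable hψφ,
    setIntegral_subgraph_fderiv hφ hH hHc, setIntegral_subgraph_fderiv hψ hH hHc]
  exact ((hH.continuous_fderiv one_ne_zero).clm_apply
    continuous_const).integrable_of_hasCompactSupport (hHc.fderiv_apply ℝ d)

end Subgraph

lemma exists_contDiff_hasCompactSupport_eventuallyEq {E F : Type*} [NormedAddCommGroup E]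
    [NormedSpace ℝ E] [FiniteDimensional ℝ E] [NormedAddCommGroup F] [NormedSpace ℝ F] {m : ℕ}
    {H : E → F} {S : Set E} (hH : ∀ p ∈ S, ContDiffAt ℝ m H p)
    (hS : IsCompact (S ∩ tsupport H)) :
    ∃ G : E → F, ContDiff ℝ m G ∧ HasCompactSupport G ∧ ∀ p ∈ S, G =ᶠ[𝓝 p] H := by
  have hopen : IsOpen {p | ContDiffAt ℝ m H p} :=
    isOpen_iff_mem_nhds.mpr fun p hp => ContDiffAt.eventually hp (by simp)
  obtain ⟨L, hL, hSL, hLH⟩ := exists_compact_between hS hopen fun p hp => hH p hp.1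
  obtain ⟨χ, hχ_one, hχ_zero, -⟩ := exists_contMDiffMap_one_nhds_of_subset_interior (n := m)
    (modelWithCornersSelf ℝ E) hS.isClosed hSL
  have hχL : tsupport χ ⊆ L :=
    closure_minimal (fun p hp => by_contra fun h => hp (hχ_zero p h)) hL.isClosed
  refine ⟨fun p => χ p • H p, contDiff_iff_contDiffAt.mpr fun p => ?_, ?_, fun p hp => ?_⟩
  · by_cases hp : p ∈ tsupport χ
    · exact χ.contMDiff.contDiff.contDiffAt.smul (hLH (hχL hp))
    · refine (contDiffAt_const (c := (0 : F))).congr_of_eventuallyEq ?_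
      filter_upwards [notMem_tsupport_iff_eventuallyEq.mp hp] with q hq
      simp only [hq, Pi.zero_apply, zero_smul]
  · exact (HasCompactSupport.intro hL hχ_zero).smul_right
  · by_cases hpH : p ∈ tsupport H
    · filter_upwards [hχ_one.filter_mono (nhds_le_nhdsSet (mem_inter hp hpH))] with q hq
      rw [hq, one_smul]
    · filter_upwards [notMem_tsupport_iff_eventuallyEq.mp hpH] with q hq
      simp only [hq, Pi.zero_apply, smul_zero]

section Divergence

/-- The divergence `tr DJ(p)` of a vector field `J` on a vector space. -/
noncomputable def divergence {V : Type*} [NormedAddCommGroup V] [NormedSpace ℝ V] (J : V → V)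
    (p : V) : ℝ :=
  LinearMap.trace ℝ V (fderiv ℝ J p)

lemma divergence_eq_sum_fderiv_repr {V ι : Type*} [NormedAddCommGroup V] [NormedSpace ℝ V]
    [FiniteDimensional ℝ V] [Fintype ι] (e : Module.Basis ι ℝ V) {J : V → V} {p : V}
    (hJ : DifferentiableAt ℝ J p) :
    divergence J p = ∑ i, fderiv ℝ (fun q => e.repr (J q) i) p (e i) := by
  classical
  rw [divergence, LinearMap.trace_eq_matrix_trace ℝ e, Matrix.trace]
  refine Finset.sum_congr rfl fun i _ => ?_
  have hcoord := (e.coord i).toContinuousLinearMap.hasFDerivAt.comp p hJ.hasFDerivAt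
  rw [Matrix.diag_apply, LinearMap.toMatrix_apply]
  exact (congrArg (· (e i)) hcoord.fderiv).symm

variable {E : Type*} [NormedAddCommGroup E] [NormedSpace ℝ E] [FiniteDimensional ℝ E]
  [MeasurableSpace E] [BorelSpace E] {μ : Measure E} [μ.IsAddHaarMeasure] {ψ φ : E → ℝ}
  {K L : NNReal} {J : ℝ × E → ℝ × E}

lemma setIntegral_betweenGraphs_divergence_of_hasCompactSupport (hψ : LipschitzWith L ψ)
    (hφ : LipschitzWith K φ) (hψφ : ψ ≤ φ) (hJ : ContDiff ℝ 1 J) (hJc : HasCompactSupport J) :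
    ∫ p in betweenGraphs ψ φ, divergence J p ∂volume.prod μ
      = (∫ x, graphConormal φ x (J (φ x, x)) ∂μ)
        - ∫ x, graphConormal ψ x (J (ψ x, x)) ∂μ := by
  set e := Module.finBasis ℝ (ℝ × E)
  have hcoord (i) : ContDiff ℝ 1 fun p => e.repr (J p) i :=
    (e.coord i).toContinuousLinearMap.contDiff.comp hJ
  have hcoord_supp (i) : HasCompactSupport fun p => e.repr (J p) i :=
    hJc.comp_left (g := fun y => e.repr y i) (by simp)
  have hint (i) : Integrable (fun p => fderiv ℝ (fun q => e.repr (J q) i) p (e i))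
      (volume.prod μ) :=
    (((hcoord i).continuous_fderiv one_ne_zero).clm_apply
      continuous_const).integrable_of_hasCompactSupport ((hcoord_supp i).fderiv_apply ℝ _)
  have hflux {χ : E → ℝ} {M : NNReal} (hχ : LipschitzWith M χ) :
      ∫ x, graphConormal χ x (J (χ x, x)) ∂μ
        = ∑ i, ∫ x, graphConormal χ x (e i) * e.repr (J (χ x, x)) i ∂μ := by
    rw [← integral_finsetSum _ fun i _ =>
      integrable_graphConormal_mul hχ (hcoord i).continuous (hcoord_supp i) (e i)]
    refine integral_congr_ae (.of_forall fun x => ?_)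
    change graphConormal χ x (J (χ x, x)) = _
    conv_lhs => rw [← e.sum_repr (J (χ x, x)), map_sum]
    simp only [map_smul, smul_eq_mul, mul_comm]
  simp only [divergence_eq_sum_fderiv_repr e (hJ.differentiable one_ne_zero _)]
  rw [integral_finsetSum _ fun i _ => (hint i).integrableOn, hflux hφ, hflux hψ,
    ← Finset.sum_sub_distrib]
  exact Finset.sum_congr rfl fun i _ =>
    setIntegral_betweenGraphs_fderiv hψ hφ hψφ (hcoord i) (hcoord_supp i) (e i)

theorem setIntegral_betweenGraphs_divergence (hψ : LipschitzWith L ψ) (hφ : LipschitzWith K φ)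
    (hψφ : ψ ≤ φ) (hJ : ∀ p ∈ closedBetweenGraphs ψ φ, ContDiffAt ℝ 1 J p)
    (hJc : IsCompact (closedBetweenGraphs ψ φ ∩ tsupport J)) :
    ∫ p in betweenGraphs ψ φ, divergence J p ∂volume.prod μ
      = (∫ x, graphConormal φ x (J (φ x, x)) ∂μ)
        - ∫ x, graphConormal ψ x (J (ψ x, x)) ∂μ := by
  obtain ⟨G, hG, hGc, hGJ⟩ := exists_contDiff_hasCompactSupport_eventuallyEq (m := 1) hJ hJc
  have hdiv : ∀ p ∈ betweenGraphs ψ φ, divergence J p = divergence G p := fun p hp => by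
    rw [divergence, divergence,
      (hGJ p (betweenGraphs_subset_closedBetweenGraphs ψ φ hp)).fderiv_eq]
  have hGφ (x) : G (φ x, x) = J (φ x, x) := (hGJ (φ x, x) ⟨hψφ x, le_rfl⟩).eq_of_nhds
  have hGψ (x) : G (ψ x, x) = J (ψ x, x) := (hGJ (ψ x, x) ⟨le_rfl, hψφ x⟩).eq_of_nhds
  rw [setIntegral_congr_fun
    (isOpen_betweenGraphs hψ.continuous hφ.continuous).measurableSet hdiv]
  simpa only [hGφ, hGψ] using
    setIntegral_betweenGraphs_divergence_of_hasCompactSupport hψ hφ hψφ hG hGc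

end Divergence

lemma fderiv_fderiv_apply_comm {E F : Type*} [NormedAddCommGroup E] [NormedSpace ℝ E]
    [NormedAddCommGroup F] [NormedSpace ℝ F] {u : E → F} {p : E} (hu : ContDiffAt ℝ 2 u p)
    (d e : E) :
    fderiv ℝ (fun q => fderiv ℝ u q d) p e = fderiv ℝ (fun q => fderiv ℝ u q e) p d := by
  have hDu : DifferentiableAt ℝ (fderiv ℝ u) p :=
    (hu.fderiv_right (m := 1) (by norm_num)).differentiableAt one_ne_zero
  have hsecond (w z : E) :
      fderiv ℝ (fun q => fderiv ℝ u q w) p z = fderiv ℝ (fderiv ℝ u) p z w := by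
    simp [fderiv_clm_apply hDu (differentiableAt_const w)]
  rw [hsecond, hsecond, (hu.isSymmSndFDerivAt (by simp)).eq]

lemma isCompact_closedBetweenGraphs_inter_tsupport {E : Type*} [NormedAddCommGroup E]
    [ProperSpace E] {ψ φ : E → ℝ} (hψ : Continuous ψ) (hφ : Continuous φ) {v : ℝ × E → ℝ} {R : ℝ}
    (hv : ∀ t x, R ≤ ‖x‖ → v (t, x) = 0) : IsCompact (closedBetweenGraphs ψ φ ∩ tsupport v) := by
  have hsupp : tsupport v ⊆ {p | ‖p.2‖ ≤ R} :=
    closure_minimal (fun p hp => le_of_not_ge fun h => hp (hv p.1 p.2 h))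
      (isClosed_le continuous_snd.norm continuous_const)
  obtain ⟨a, ha⟩ := (isCompact_closedBall 0 R).bddBelow_image hψ.continuousOn
  obtain ⟨b, hb⟩ := (isCompact_closedBall 0 R).bddAbove_image hφ.continuousOn
  refine ((isCompact_Icc (a := a) (b := b)).prod (isCompact_closedBall 0 R)).of_isClosed_subset
    ((isClosed_closedBetweenGraphs hψ hφ).inter (isClosed_tsupport v)) fun p hp => ?_
  have hball : p.2 ∈ Metric.closedBall 0 R := mem_closedBall_zero_iff.mpr (hsupp hp.2)
  exact ⟨⟨(ha (mem_image_of_mem ψ hball)).trans hp.1.1,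
    hp.1.2.trans (hb (mem_image_of_mem φ hball))⟩, hball⟩

lemma sum_sum_mul_add_mul_of_symm {ι R : Type*} [Fintype ι] [CommRing R] {G : ι → ι → R}
    (hG : ∀ i j, G i j = G j i) (a d : ι → R) (w : R) :
    ∑ i, ∑ j, G i j * (a i + d i * w) * (a j + d j * w)
      = (∑ i, ∑ j, G i j * a i * a j) + 2 * w * (∑ i, d i * ∑ j, G i j * a j)
        + w ^ 2 * ∑ i, ∑ j, G i j * d i * d j := by
  have hcross : ∑ i, ∑ j, G i j * a i * d j = ∑ i, ∑ j, G i j * d i * a j := by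
    rw [Finset.sum_comm]
    refine Finset.sum_congr rfl fun i _ => Finset.sum_congr rfl fun j _ => ?_
    rw [hG j i]
    ring
  calc ∑ i, ∑ j, G i j * (a i + d i * w) * (a j + d j * w)
      = (∑ i, ∑ j, G i j * a i * a j) + w * (∑ i, ∑ j, G i j * a i * d j)
        + w * (∑ i, ∑ j, G i j * d i * a j) + w ^ 2 * ∑ i, ∑ j, G i j * d i * d j := by
        simp only [Finset.mul_sum, ← Finset.sum_add_distrib]
        exact Finset.sum_congr rfl fun i _ => Finset.sum_congr rfl fun j _ => by ring
    _ = _ := by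
        simp only [hcross, Finset.mul_sum, ← Finset.sum_add_distrib]
        exact Finset.sum_congr rfl fun i _ => Finset.sum_congr rfl fun j _ => by ring

section Energy

variable {n : ℕ}

lemma divergence_eq_Dt_add_sum_Dx {J : ℝ × (Fin n → ℝ) → ℝ × (Fin n → ℝ)}
    {p : ℝ × (Fin n → ℝ)} (hJ : DifferentiableAt ℝ J p) :
    divergence J p = Dt (fun q => (J q).1) p + ∑ α, Dx α (fun q => (J q).2 α) p := by
  rw [divergence_eq_sum_fderiv_repr
    ((Module.Basis.singleton Unit ℝ).prod (Pi.basisFun ℝ (Fin n))) hJ]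
  simp [Dt, Dx]

/-- The energy density `(∂_t v)² + Σ g^{αβ} ∂_α v ∂_β v + v²`. -/
noncomputable def energyDensity (g : Fin n → Fin n → ℝ × (Fin n → ℝ) → ℝ)
    (v : ℝ × (Fin n → ℝ) → ℝ) (p : ℝ × (Fin n → ℝ)) : ℝ :=
  Dt v p ^ 2 + (∑ α, ∑ β, g α β p * Dx α v p * Dx β v p) + v p ^ 2

/-- The `α`-th component `-2 ∂_t v Σ g^{αβ} ∂_β v` of the energy flux. -/
noncomputable def energyFlux (g : Fin n → Fin n → ℝ × (Fin n → ℝ) → ℝ)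
    (v : ℝ × (Fin n → ℝ) → ℝ) (α : Fin n) (p : ℝ × (Fin n → ℝ)) : ℝ :=
  -2 * (Dt v p * ∑ β, g α β p * Dx β v p)

/-- The energy current: the spacetime vector field whose time component is the energy density and
whose space component is the energy flux. -/
noncomputable def energyCurrent (g : Fin n → Fin n → ℝ × (Fin n → ℝ) → ℝ)
    (v : ℝ × (Fin n → ℝ) → ℝ) (p : ℝ × (Fin n → ℝ)) : ℝ × (Fin n → ℝ) :=
  (energyDensity g v p, fun α => energyFlux g v α p)

/-- The energy density carried by the graph `{t = φ(x)}`, with respect to `dx`: a quadratic form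
in `v`, `∂_t v` and the tangential derivatives `∂_α v + ∂_αφ ∂_t v`. -/
noncomputable def graphEnergyDensity (g : Fin n → Fin n → ℝ × (Fin n → ℝ) → ℝ)
    (v : ℝ × (Fin n → ℝ) → ℝ) (φ : (Fin n → ℝ) → ℝ) (x : Fin n → ℝ) : ℝ :=
  Dt v (φ x, x) ^ 2 *
      (1 - ∑ α, ∑ β, g α β (φ x, x) * fderiv ℝ φ x (Pi.single α 1)
        * fderiv ℝ φ x (Pi.single β 1))
    + (∑ α, ∑ β, g α β (φ x, x)
        * (Dx α v (φ x, x) + fderiv ℝ φ x (Pi.single α 1) * Dt v (φ x, x))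
        * (Dx β v (φ x, x) + fderiv ℝ φ x (Pi.single β 1) * Dt v (φ x, x)))
    + v (φ x, x) ^ 2

variable {g : Fin n → Fin n → ℝ × (Fin n → ℝ) → ℝ} {v : ℝ × (Fin n → ℝ) → ℝ}
  {p : ℝ × (Fin n → ℝ)} {ψ φ : (Fin n → ℝ) → ℝ}

lemma graphEnergyDensity_const (g : Fin n → Fin n → ℝ × (Fin n → ℝ) → ℝ)
    (v : ℝ × (Fin n → ℝ) → ℝ) (a : ℝ) (x : Fin n → ℝ) :
    graphEnergyDensity g v (fun _ => a) x = energyDensity g v (a, x) := by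
  simp [graphEnergyDensity, energyDensity]

lemma graphConormal_energyCurrent {x : Fin n → ℝ}
    (hg : ∀ α β, g α β (φ x, x) = g β α (φ x, x)) :
    graphConormal φ x (energyCurrent g v (φ x, x)) = graphEnergyDensity g v φ x := by
  have hflux : fderiv ℝ φ x (fun α => energyFlux g v α (φ x, x))
      = -2 * Dt v (φ x, x) * ∑ α, fderiv ℝ φ x (Pi.single α 1)
        * ∑ β, g α β (φ x, x) * Dx β v (φ x, x) := by
    rw [← ContinuousLinearMap.coe_coe, LinearMap.pi_apply_eq_sum_univ, Finset.mul_sum]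
    refine Finset.sum_congr rfl fun α _ => ?_
    have hsingle : (fun β => if α = β then (1 : ℝ) else 0) = Pi.single α 1 := by
      ext β
      simp [Pi.single_apply, eq_comm]
    rw [hsingle, smul_eq_mul, ContinuousLinearMap.coe_coe, energyFlux]
    ring
  rw [graphConormal_apply, graphEnergyDensity, sum_sum_mul_add_mul_of_symm hg]
  simp only [energyCurrent, hflux, energyDensity]
  ring

lemma tsupport_energyCurrent_subset : tsupport (energyCurrent g v) ⊆ tsupport v := by
  refine closure_minimal (fun p hp => by_contra fun h => hp ?_) (isClosed_tsupport v)
  have hv : v p = 0 := image_eq_zero_of_notMem_tsupport h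
  have hDv : fderiv ℝ v p = 0 :=
    image_eq_zero_of_notMem_tsupport fun h' => h (tsupport_fderiv_subset ℝ h')
  ext <;> simp [energyCurrent, energyDensity, energyFlux, Dt, Dx, hv, hDv]

lemma contDiffAt_Dt (hv : ContDiffAt ℝ 2 v p) : ContDiffAt ℝ 1 (Dt v) p :=
  (hv.fderiv_right (by norm_num)).clm_apply contDiffAt_const

lemma contDiffAt_Dx (hv : ContDiffAt ℝ 2 v p) (α : Fin n) : ContDiffAt ℝ 1 (Dx α v) p :=
  (hv.fderiv_right (by norm_num)).clm_apply contDiffAt_const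

lemma contDiffAt_energyCurrent (hg : ∀ α β, ContDiffAt ℝ 1 (g α β) p)
    (hv : ContDiffAt ℝ 2 v p) : ContDiffAt ℝ 1 (energyCurrent g v) p := by
  have hvt := contDiffAt_Dt hv
  have hvx := contDiffAt_Dx hv
  have hdensity : ContDiffAt ℝ 1 (energyDensity g v) p :=
    ((hvt.pow 2).add (ContDiffAt.sum fun α _ => ContDiffAt.sum fun β _ =>
      ((hg α β).mul (hvx α)).mul (hvx β))).add ((hv.of_le (by norm_num)).pow 2)
  have hflux (α : Fin n) : ContDiffAt ℝ 1 (energyFlux g v α) p :=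
    contDiffAt_const.mul (hvt.mul (ContDiffAt.sum fun β _ => (hg α β).mul (hvx β)))
  exact hdensity.prodMk (contDiffAt_pi.mpr hflux)

lemma Dt_energyDensity (hg : ∀ α β, DifferentiableAt ℝ (g α β) p) (hv : ContDiffAt ℝ 2 v p) :
    Dt (energyDensity g v) p = 2 * Dt v p * Dt (Dt v) p
      + (∑ α, ∑ β, (Dt (g α β) p * Dx α v p * Dx β v p
          + g α β p * Dt (Dx α v) p * Dx β v p + g α β p * Dx α v p * Dt (Dx β v) p))
      + 2 * v p * Dt v p := by
  have hvt := ((contDiffAt_Dt hv).differentiableAt one_ne_zero).hasFDerivAt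
  have hvx (α) := ((contDiffAt_Dx hv α).differentiableAt one_ne_zero).hasFDerivAt
  have hderiv : HasFDerivAt (energyDensity g v) _ p :=
    ((hvt.pow 2).add (HasFDerivAt.fun_sum (u := Finset.univ) fun α _ =>
      HasFDerivAt.fun_sum (u := Finset.univ) fun β _ =>
        ((hg α β).hasFDerivAt.fun_mul (hvx α)).fun_mul (hvx β))).add
      ((hv.differentiableAt two_ne_zero).hasFDerivAt.pow 2)
  refine (congrArg (· (1, 0)) hderiv.fderiv).trans ?_
  simp only [Dt, add_apply, sum_apply, smul_apply, smul_eq_mul, nsmul_eq_mul, Nat.cast_ofNat,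
    Nat.add_one_sub_one, pow_one]
  congr 2
  exact Finset.sum_congr rfl fun α _ => Finset.sum_congr rfl fun β _ => by ring

lemma Dx_energyFlux (hg : ∀ α β, DifferentiableAt ℝ (g α β) p) (hv : ContDiffAt ℝ 2 v p)
    (α : Fin n) :
    Dx α (energyFlux g v α) p = -2 * ∑ β, (g α β p * Dx α (Dt v) p * Dx β v p
      + Dx α (g α β) p * Dt v p * Dx β v p + Dt v p * (g α β p * Dx α (Dx β v) p)) := by
  have hvt := ((contDiffAt_Dt hv).differentiableAt one_ne_zero).hasFDerivAt
  have hvx (α) := ((contDiffAt_Dx hv α).differentiableAt one_ne_zero).hasFDerivAt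
  have hderiv : HasFDerivAt (energyFlux g v α) _ p :=
    (hvt.fun_mul (HasFDerivAt.fun_sum (u := Finset.univ) fun β _ =>
      (hg α β).hasFDerivAt.fun_mul (hvx β))).const_mul (-2)
  refine (congrArg (· (0, Pi.single α 1)) hderiv.fderiv).trans ?_
  simp only [Dx, add_apply, sum_apply, smul_apply, smul_eq_mul]
  rw [Finset.mul_sum, Finset.sum_mul, ← Finset.sum_add_distrib]
  congr 1
  exact Finset.sum_congr rfl fun β _ => by ring

lemma divergence_energyCurrent (hg : ∀ α β, ContDiffAt ℝ 1 (g α β) p)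
    (hgsymm : ∀ α β, g α β p = g β α p) (hv : ContDiffAt ℝ 2 v p) :
    divergence (energyCurrent g v) p
      = 2 * Dt v p * (Dt (Dt v) p - ∑ α, ∑ β, g α β p * Dx α (Dx β v) p)
        + (∑ α, ∑ β, Dt (g α β) p * Dx α v p * Dx β v p)
        - 2 * (∑ α, ∑ β, Dx α (g α β) p * Dt v p * Dx β v p)
        + 2 * v p * Dt v p := by
  have hg' (α β) := (hg α β).differentiableAt one_ne_zero
  have hcomm (α) : Dt (Dx α v) p = Dx α (Dt v) p := fderiv_fderiv_apply_comm hv _ _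
  have hcross : (∑ α, ∑ β, g α β p * Dx α v p * Dx β (Dt v) p)
      = ∑ α, ∑ β, g α β p * Dx α (Dt v) p * Dx β v p := by
    rw [Finset.sum_comm]
    refine Finset.sum_congr rfl fun α _ => Finset.sum_congr rfl fun β _ => ?_
    rw [hgsymm β α]
    ring
  rw [divergence_eq_Dt_add_sum_Dx
    ((contDiffAt_energyCurrent hg hv).differentiableAt one_ne_zero)]
  change Dt (energyDensity g v) p + ∑ α, Dx α (energyFlux g v α) p = _
  simp only [Dt_energyDensity hg' hv, Dx_energyFlux hg' hv, hcomm, Finset.sum_add_distrib,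
    ← Finset.mul_sum, hcross]
  ring

theorem stmt_8_general {K L : NNReal} (hψ : LipschitzWith L ψ) (hφ : LipschitzWith K φ)
    (hψφ : ψ ≤ φ) (hg : ∀ p ∈ closedBetweenGraphs ψ φ, ∀ α β, ContDiffAt ℝ 1 (g α β) p)
    (hgsymm : ∀ p ∈ closedBetweenGraphs ψ φ, ∀ α β, g α β p = g β α p)
    (hv : ∀ p ∈ closedBetweenGraphs ψ φ, ContDiffAt ℝ 2 v p)
    (hvc : IsCompact (closedBetweenGraphs ψ φ ∩ tsupport v))
    {b0 c f : ℝ × (Fin n → ℝ) → ℝ} {b : Fin n → ℝ × (Fin n → ℝ) → ℝ}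
    (heq : ∀ p ∈ betweenGraphs ψ φ,
      Dt (Dt v) p - (∑ α, ∑ β, g α β p * Dx α (Dx β v) p)
        + b0 p * Dt v p + (∑ α, b α p * Dx α v p) + c p * v p = f p) :
    ∫ x, graphEnergyDensity g v φ x
      = (∫ x, graphEnergyDensity g v ψ x)
        - ∫ p in betweenGraphs ψ φ,
            (2 * Dt v p * (b0 p * Dt v p + (∑ α, b α p * Dx α v p) + c p * v p)
              + 2 * (∑ α, ∑ β, Dx α (g α β) p * Dt v p * Dx β v p)
              - (∑ α, ∑ β, Dt (g α β) p * Dx α v p * Dx β v p)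
              - 2 * v p * Dt v p - 2 * f p * Dt v p) := by
  have hJc : IsCompact (closedBetweenGraphs ψ φ ∩ tsupport (energyCurrent g v)) :=
    hvc.of_isClosed_subset ((isClosed_closedBetweenGraphs hψ.continuous hφ.continuous).inter
      (isClosed_tsupport _)) (inter_subset_inter_right _ tsupport_energyCurrent_subset)
  have hbalance := setIntegral_betweenGraphs_divergence (μ := volume) hψ hφ hψφ
    (fun p hp => contDiffAt_energyCurrent (hg p hp) (hv p hp)) hJc
  simp only [graphConormal_energyCurrent (hgsymm _ ⟨hψφ _, le_rfl⟩),
    graphConormal_energyCurrent (hgsymm _ ⟨le_rfl, hψφ _⟩)] at hbalance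
  rw [sub_eq_iff_eq_add'.mp hbalance.symm, sub_eq_add_neg, ← integral_neg]
  congr 1
  refine setIntegral_congr_fun
    (isOpen_betweenGraphs hψ.continuous hφ.continuous).measurableSet fun p hp => ?_
  have hp' := betweenGraphs_subset_closedBetweenGraphs ψ φ hp
  have hdiv := divergence_energyCurrent (hg p hp') (hgsymm p hp') (hv p hp')
  linear_combination hdiv + 2 * Dt v p * heq p hp

end Energy

/-- Energy balance identity between the initial slice `{t = −T}` and
the Lipschitz graph hypersurface `Σ = {(φ(x),x)}`, obtained by integrating the energy
density identity over the past region `{−T < t < φ(x)}`. -/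
theorem stmt_8 (n : ℕ) (hn : 1 ≤ n) (T : ℝ) (hT : 0 < T)
    (U : Set (ℝ × (Fin n → ℝ))) (hU : IsOpen U)
    (hUsub : Set.Icc (-T) T ×ˢ (Set.univ : Set (Fin n → ℝ)) ⊆ U)
    (g : Fin n → Fin n → ℝ × (Fin n → ℝ) → ℝ)
    (hg : ∀ α β, ContDiffOn ℝ 1 (g α β) U)
    (hgsymm : ∀ α β p, g α β p = g β α p)
    (hgpos : ∀ p ∈ U, ∀ ξ : Fin n → ℝ, ξ ≠ 0 → 0 < ∑ α, ∑ β, g α β p * ξ α * ξ β)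
    (φ : (Fin n → ℝ) → ℝ) (hφ : ∃ K : NNReal, LipschitzWith K φ)
    (hφT : ∀ x, -T < φ x ∧ φ x < T)
    (b0 : ℝ × (Fin n → ℝ) → ℝ) (b : Fin n → ℝ × (Fin n → ℝ) → ℝ)
    (c f : ℝ × (Fin n → ℝ) → ℝ)
    (hb0 : ContinuousOn b0 (Set.Icc (-T) T ×ˢ (Set.univ : Set (Fin n → ℝ))))
    (hb : ∀ α, ContinuousOn (b α) (Set.Icc (-T) T ×ˢ (Set.univ : Set (Fin n → ℝ))))
    (hc : ContinuousOn c (Set.Icc (-T) T ×ˢ (Set.univ : Set (Fin n → ℝ))))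
    (hf : ContinuousOn f (Set.Icc (-T) T ×ˢ (Set.univ : Set (Fin n → ℝ))))
    (v : ℝ × (Fin n → ℝ) → ℝ) (hv : ContDiffOn ℝ 2 v U)
    (hsupp : ∃ R : ℝ, 0 < R ∧ ∀ (t : ℝ) (x : Fin n → ℝ), R ≤ ‖x‖ → v (t, x) = 0)
    (heq : ∀ p ∈ Set.Icc (-T) T ×ˢ (Set.univ : Set (Fin n → ℝ)),
      Dt (Dt v) p - (∑ α, ∑ β, g α β p * Dx α (Dx β v) p)
        + b0 p * Dt v p + (∑ α, b α p * Dx α v p) + c p * v p = f p) :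
    (∫ x : Fin n → ℝ,
        ((Dt v (φ x, x)) ^ 2 *
            (1 - ∑ α, ∑ β, g α β (φ x, x) * fderiv ℝ φ x (Pi.single α 1)
              * fderiv ℝ φ x (Pi.single β 1))
          + (∑ α, ∑ β, g α β (φ x, x)
              * (Dx α v (φ x, x) + fderiv ℝ φ x (Pi.single α 1) * Dt v (φ x, x))
              * (Dx β v (φ x, x) + fderiv ℝ φ x (Pi.single β 1) * Dt v (φ x, x)))
          + (v (φ x, x)) ^ 2))
      = (∫ x : Fin n → ℝ,
          ((Dt v (-T, x)) ^ 2
            + (∑ α, ∑ β, g α β (-T, x) * Dx α v (-T, x) * Dx β v (-T, x))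
            + (v (-T, x)) ^ 2))
        - ∫ p in {p : ℝ × (Fin n → ℝ) | -T < p.1 ∧ p.1 < φ p.2},
            (2 * Dt v p * (b0 p * Dt v p + (∑ α, b α p * Dx α v p) + c p * v p)
              + 2 * (∑ α, ∑ β, Dx α (g α β) p * Dt v p * Dx β v p)
              - (∑ α, ∑ β, Dt (g α β) p * Dx α v p * Dx β v p)
              - 2 * v p * Dt v p - 2 * f p * Dt v p) := by
  obtain ⟨K, hK⟩ := hφ
  obtain ⟨R, -, hR⟩ := hsupp
  have hslab : closedBetweenGraphs (fun _ => -T) φ ⊆ Icc (-T) T ×ˢ univ :=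
    fun p hp => ⟨⟨hp.1, hp.2.trans (hφT p.2).2.le⟩, mem_univ _⟩
  have hnhds {p} (hp : p ∈ closedBetweenGraphs (fun _ => -T) φ) : U ∈ 𝓝 p :=
    hU.mem_nhds (hUsub (hslab hp))
  have hbalance := stmt_8_general (.const (-T)) hK (fun x => (hφT x).1.le)
    (fun p hp α β => (hg α β).contDiffAt (hnhds hp)) (fun p _ α β => hgsymm α β p)
    (fun p hp => hv.contDiffAt (hnhds hp))
    (isCompact_closedBetweenGraphs_inter_tsupport continuous_const hK.continuous hR)
    fun p hp => heq p (hslab (betweenGraphs_subset_closedBetweenGraphs _ _ hp))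
  simp only [graphEnergyDensity_const] at hbalance
  exact hbalance
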